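/- Let k be a field of characteristic different from 2 and let α ∈ k with α ∉ {0, 1, −1}. Set A = [[1,−1],[1,1]], S_α = [[0,1],[α,0]], and T_α = [[1,−α⁻¹],[1,−1]] over k. Then for every i ∈ {1,2,3}, every N ∈ {S_α, T_α, S_α·T_α}, and every c ∈ k, one has Aⁱ ≠ c·N; moreover Aⁱ is not a scalar matrix for i ∈ {1,2,3}. Consequently the cyclic group of order 4 generated by the image of A in PGL₂(k) intersects the Klein four-group generated by the images of S_α and T_α trivially. -/

import Mathlib

theorem mk_eq_iff_smul {k : Type*} [Field k] (g h : GL (Fin 2) k) :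
    (QuotientGroup.mk g : GL (Fin 2) k ⧸ Subgroup.center (GL (Fin 2) k)) = QuotientGroup.mk h ↔
      ∃ c : k, (g : Matrix (Fin 2) (Fin 2) k) = c • (h : Matrix (Fin 2) (Fin 2) k) := by
  rw [eq_comm, QuotientGroup.eq, Matrix.GeneralLinearGroup.mem_center_iff_val_eq_scalar]
  constructor
  · rintro ⟨c, hc⟩
    refine ⟨c, ?_⟩
    have : (g : Matrix (Fin 2) (Fin 2) k) = (h : Matrix (Fin 2) (Fin 2) k) * ((h⁻¹ * g : GL (Fin 2) k) : Matrix (Fin 2) (Fin 2) k) := by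
      rw [← Units.val_mul, mul_inv_cancel_left]
    rw [this, ← hc, Matrix.scalar_apply, ← Matrix.smul_one_eq_diagonal]
    simp
  · rintro ⟨c, hc⟩
    refine ⟨c, ?_⟩
    rw [Units.val_mul, hc, mul_smul_comm, ← Units.val_mul, inv_mul_cancel, Matrix.scalar_apply,
      ← Matrix.smul_one_eq_diagonal, Units.val_one]

theorem closure_klein {G : Type*} [Group G] (a b : G) (ha : a * a = 1) (hb : b * b = 1)
    (hab : b * a = a * b) (x : G) (hx : x ∈ Subgroup.closure {a, b}) :
    x = 1 ∨ x = a ∨ x = b ∨ x = a * b := by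
  have ha' : ∀ y, a * (a * y) = y := fun y => by rw [← mul_assoc, ha, one_mul]
  have hb' : ∀ y, b * (b * y) = y := fun y => by rw [← mul_assoc, hb, one_mul]
  have hab' : ∀ y, b * (a * y) = a * (b * y) := fun y => by rw [← mul_assoc, hab, mul_assoc]
  induction hx using Subgroup.closure_induction with
  | mem x hx => rcases hx with rfl | rfl <;> simp
  | one => simp
  | mul x y _ _ hx hy =>
    rcases hx with rfl | rfl | rfl | rfl <;> rcases hy with rfl | rfl | rfl | rfl <;>
      simp [mul_assoc, ha, hb, hab, ha', hb', hab']
  | inv x _ hx =>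
    have ia : a⁻¹ = a := inv_eq_of_mul_eq_one_left ha
    have ib : b⁻¹ = b := inv_eq_of_mul_eq_one_left hb
    rcases hx with rfl | rfl | rfl | rfl <;> simp [ia, ib, hab]

/-- For `α ∉ {0,1,-1}` and `A = !![1,-1;1,1]`, `S_α = !![0,1;α,0]`,
`T_α = !![1,-α⁻¹;1,-1]`: no `Aⁱ` (`i ∈ {1,2,3}`) is a scalar multiple of an element of
`{S_α, T_α, S_α T_α}`, and no `Aⁱ` (`i ∈ {1,2,3}`) is scalar; consequently the cyclic
order-4 subgroup of `PGL₂(k)` generated by the image of `A` intersects the Klein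
four-group generated by the images of `S_α` and `T_α` trivially. -/
theorem cyclic_four_and_klein_four_intersect_trivially
    (k : Type*) [Field k] (h2 : (2 : k) ≠ 0)
    (α : k) (h0 : α ≠ 0) (h1 : α ≠ 1) (hm1 : α ≠ -1) :
    (∀ i ∈ ({1, 2, 3} : Set ℕ),
      ∀ N ∈ ({!![0, 1; α, 0], !![1, -α⁻¹; 1, -1],
        !![0, 1; α, 0] * !![1, -α⁻¹; 1, -1]} : Set (Matrix (Fin 2) (Fin 2) k)),
      ∀ c : k, (!![1, -1; 1, 1] : Matrix (Fin 2) (Fin 2) k) ^ i ≠ c • N) ∧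
    (∀ i ∈ ({1, 2, 3} : Set ℕ),
      ¬ ∃ c : k, (!![1, -1; 1, 1] : Matrix (Fin 2) (Fin 2) k) ^ i =
        c • (1 : Matrix (Fin 2) (Fin 2) k)) ∧
    ∀ u v w : GL (Fin 2) k,
      (↑u : Matrix (Fin 2) (Fin 2) k) = !![1, -1; 1, 1] →
      (↑v : Matrix (Fin 2) (Fin 2) k) = !![0, 1; α, 0] →
      (↑w : Matrix (Fin 2) (Fin 2) k) = !![1, -α⁻¹; 1, -1] →
      Subgroup.zpowers (QuotientGroup.mk u :
          GL (Fin 2) k ⧸ Subgroup.center (GL (Fin 2) k)) ⊓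
        Subgroup.closure
          {(QuotientGroup.mk v : GL (Fin 2) k ⧸ Subgroup.center (GL (Fin 2) k)),
            QuotientGroup.mk w} = ⊥ := by
  have hA2 : (!![1, -1; 1, 1] : Matrix (Fin 2) (Fin 2) k) ^ 2 = !![0, -2; 2, 0] := by
    ext i j; fin_cases i <;> fin_cases j <;> simp [pow_two] <;> ring
  have hA3 : (!![1, -1; 1, 1] : Matrix (Fin 2) (Fin 2) k) ^ 3 = !![-2, -2; 2, -2] := by
    rw [pow_succ, hA2]
    ext i j; fin_cases i <;> fin_cases j <;> simp
  have hA4 : (!![1, -1; 1, 1] : Matrix (Fin 2) (Fin 2) k) ^ 4 = (-4 : k) • 1 := by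
    rw [pow_succ, hA3]
    ext i j; fin_cases i <;> fin_cases j <;> simp <;> ring
  have hST : (!![0, 1; α, 0] : Matrix (Fin 2) (Fin 2) k) * !![1, -α⁻¹; 1, -1]
      = !![1, -1; α, -1] := by
    ext i j; fin_cases i <;> fin_cases j <;> simp [h0]
  have P1 : ∀ i ∈ ({1, 2, 3} : Set ℕ),
      ∀ N ∈ ({!![0, 1; α, 0], !![1, -α⁻¹; 1, -1],
        !![0, 1; α, 0] * !![1, -α⁻¹; 1, -1]} : Set (Matrix (Fin 2) (Fin 2) k)),
      ∀ c : k, (!![1, -1; 1, 1] : Matrix (Fin 2) (Fin 2) k) ^ i ≠ c • N := by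
    rintro i (rfl | rfl | rfl) N (rfl | rfl | rfl) c h <;>
    simp only [pow_one, hA2, hA3, hST] at h <;>
    have e00 := congrFun (congrFun h 0) 0 <;>
    have e01 := congrFun (congrFun h 0) 1 <;>
    have e10 := congrFun (congrFun h 1) 0 <;>
    have e11 := congrFun (congrFun h 1) 1 <;>
    clear h hA2 hA3 hA4 hST <;>
    simp at e00 e01 e10 e11 <;>
    grind
  have P2 : ∀ i ∈ ({1, 2, 3} : Set ℕ),
      ¬ ∃ c : k, (!![1, -1; 1, 1] : Matrix (Fin 2) (Fin 2) k) ^ i =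
        c • (1 : Matrix (Fin 2) (Fin 2) k) := by
    rintro i (rfl | rfl | rfl) ⟨c, h⟩ <;>
    simp only [pow_one, hA2, hA3] at h <;>
    have e10 := congrFun (congrFun h 1) 0 <;>
    simp at e10 <;> exact h2 e10
  refine ⟨P1, P2, ?_⟩
  intro u v w hu hv hw
  rw [eq_bot_iff]
  rintro x ⟨hx1, hx2⟩
  have hx2 := closure_klein _ _ (by
      rw [← QuotientGroup.mk_mul, ← QuotientGroup.mk_one, mk_eq_iff_smul]
      refine ⟨α, ?_⟩
      rw [Units.val_mul, hv]
      ext i j; fin_cases i <;> fin_cases j <;> simp) (by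
      rw [← QuotientGroup.mk_mul, ← QuotientGroup.mk_one, mk_eq_iff_smul]
      refine ⟨1 - α⁻¹, ?_⟩
      rw [Units.val_mul, hw]
      ext i j; fin_cases i <;> fin_cases j <;> simp <;> ring) (by
      rw [← QuotientGroup.mk_mul, ← QuotientGroup.mk_mul, mk_eq_iff_smul]
      refine ⟨-1, ?_⟩
      rw [Units.val_mul, Units.val_mul, hw, hv]
      ext i j; fin_cases i <;> fin_cases j <;> simp [h0]) x hx2
  obtain ⟨n, hn⟩ := Subgroup.mem_zpowers_iff.1 hx1
  have hu4 : (QuotientGroup.mk u : GL (Fin 2) k ⧸ Subgroup.center (GL (Fin 2) k)) ^ (4 : ℤ) = 1 := by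
    rw [show (4 : ℤ) = ((4 : ℕ) : ℤ) from rfl, zpow_natCast, ← QuotientGroup.mk_pow,
      ← QuotientGroup.mk_one, mk_eq_iff_smul]
    exact ⟨-4, by rw [Units.val_pow_eq_pow_val, hu, hA4, Units.val_one]⟩
  obtain ⟨m, hm, hxm⟩ : ∃ m : ℕ, m < 4 ∧ x = QuotientGroup.mk (u ^ m) := by
    refine ⟨(n % 4).toNat, by omega, ?_⟩
    rw [QuotientGroup.mk_pow, ← zpow_natCast, Int.toNat_of_nonneg (by omega), ← hn]
    conv_lhs => rw [← Int.emod_add_mul_ediv n 4, zpow_add, zpow_mul, hu4, one_zpow, mul_one]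
  rw [Subgroup.mem_bot]
  rcases Nat.eq_zero_or_pos m with rfl | hpos
  · rw [hxm, pow_zero, QuotientGroup.mk_one]
  have hmem : m ∈ ({1, 2, 3} : Set ℕ) := by
    simp only [Set.mem_insert_iff, Set.mem_singleton_iff]; omega
  rcases hx2 with h | h | h | h
  · exact h
  all_goals
    exfalso
    rw [hxm] at h
    try rw [← QuotientGroup.mk_mul] at h
    rw [mk_eq_iff_smul] at h
    obtain ⟨c, hc⟩ := h
    rw [Units.val_pow_eq_pow_val, hu] at hc
    try rw [Units.val_mul] at hc
    refine P1 m hmem _ ?_ c hc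
    simp [hv, hw]
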